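/- Let F be a field of characteristic different from 2, let Φ ∈ M_n(F) be symmetric and invertible, and let σ be the involution on M_n(F) given by σ(X) = ΦXᵀΦ⁻¹. Let b_1, ..., b_t ∈ F be nonzero and let Y be the set of field orderings P of F with b_1 >_P 0, ..., b_t >_P 0. Let a ∈ M_n(F) be invertible with σ(a) = a and such that Φ⁻¹a is positive definite at every P ∈ Y. Then for every invertible u ∈ M_n(F) with σ(u) = u, the following are equivalent: (i) Φ⁻¹u is positive definite at every P ∈ Y; (ii) there exists for each e ∈ {0,1}^t a finite list of matrices X_{e,1}, ..., X_{e,N} ∈ M_n(F) such that u = Σ_{e ∈ {0,1}^t} b_1^{e_1}···b_t^{e_t} · Σ_{i=1}^{N} σ(X_{e,i}) a X_{e,i}. -/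

import Mathlib

open Matrix BigOperators

/-- A field ordering of `F`, given by its cone of nonnegative elements.
This is equivalent to a linear order making `F` a linearly ordered field. -/
structure FieldOrdering (F : Type*) [Field F] where
  nonneg : F → Prop
  add_nonneg : ∀ {x y : F}, nonneg x → nonneg y → nonneg (x + y)
  mul_nonneg : ∀ {x y : F}, nonneg x → nonneg y → nonneg (x * y)
  total : ∀ x : F, nonneg x ∨ nonneg (-x)
  eq_zero_of : ∀ {x : F}, nonneg x → nonneg (-x) → x = 0

/-- `x >_P 0`. -/
def FieldOrdering.pos {F : Type*} [Field F] (P : FieldOrdering F) (x : F) : Prop :=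
  P.nonneg x ∧ x ≠ 0

/-- A matrix is positive semidefinite at an ordering `P` if `xᵀMx ≥_P 0` for all `x`. -/
def Matrix.IsPSDAt {F : Type*} [Field F] {n : ℕ} (P : FieldOrdering F)
    (M : Matrix (Fin n) (Fin n) F) : Prop :=
  ∀ x : Fin n → F, P.nonneg (x ⬝ᵥ (M *ᵥ x))

/-- A matrix is positive definite at an ordering `P` if `xᵀMx >_P 0` for all `x ≠ 0`. -/
def Matrix.IsPDAt {F : Type*} [Field F] {n : ℕ} (P : FieldOrdering F)
    (M : Matrix (Fin n) (Fin n) F) : Prop :=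
  ∀ x : Fin n → F, x ≠ 0 → P.pos (x ⬝ᵥ (M *ᵥ x))

/-!
Write `T` for the set of sums of elements `b^e q²`. It is a semiring containing all squares, so by
Artin's argument (a maximal preordering of a field is an ordering) `T` is exactly the set of
elements that are nonnegative at every ordering in `Y`.

Put `A = Φ⁻¹a` and `U = Φ⁻¹u`. After multiplication by `Φ⁻¹`, condition (ii) says that `U` is a sum
of terms `b^e XᵀAX`, hence positive semidefinite on `Y`. Conversely, diagonalising `U` gives
`U = ∑ dₖ rₖrₖᵀ` with `dₖ` a value of the form `U`, and if `q = wᵀAw ≠ 0` then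
`dₖ rₖrₖᵀ = dₖ q · YₖᵀAYₖ` for the rank one matrix `Yₖ = q⁻¹ w rₖᵀ`. As `dₖ` and `q` lie in `T`, so
do their products, which yields the required representation. For invertible `U`, positive
semidefinite and positive definite mean the same.
-/

namespace FieldOrdering

variable {F : Type*} [Field F] (P : FieldOrdering F)

theorem mul_self_nonneg (x : F) : P.nonneg (x * x) := by
  rcases P.total x with h | h
  · exact P.mul_nonneg h h
  · simpa using P.mul_nonneg h h

/-- The nonnegative elements of an ordering, bundled as a subsemiring so that the library's closure
lemmas for sums and products apply to them. -/
def nonnegSubsemiring : Subsemiring F where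
  carrier := {x | P.nonneg x}
  zero_mem' := by simpa using P.mul_self_nonneg 0
  one_mem' := by simpa using P.mul_self_nonneg 1
  add_mem' := P.add_nonneg
  mul_mem' := P.mul_nonneg

theorem not_nonneg_neg_one : ¬ P.nonneg (-1) :=
  fun h => one_ne_zero (P.eq_zero_of P.nonnegSubsemiring.one_mem h)

theorem two_ne_zero (P : FieldOrdering F) : (2 : F) ≠ 0 := by
  intro h
  have neg_one_eq : (-1 : F) = 1 := by linear_combination -h
  exact P.not_nonneg_neg_one (neg_one_eq.symm ▸ P.nonnegSubsemiring.one_mem)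

/-- The field ordering whose nonnegative elements are those of a preordering containing `x` or `-x`
for every `x`. -/
def ofPreordering (T : RingPreordering F) [HasMemOrNegMem T] : FieldOrdering F where
  nonneg x := x ∈ T
  add_nonneg := add_mem
  mul_nonneg := mul_mem
  total := mem_or_neg_mem T
  eq_zero_of := RingPreordering.eq_zero_of_mem_of_neg_mem

end FieldOrdering

section Preordering

theorem exists_le_isMax_preordering {R : Type*} [CommRing R] (T : RingPreordering R) :
    ∃ M : RingPreordering R, T ≤ M ∧ IsMax M := by
  refine zorn_le_nonempty_Ici₀ T (fun c _ hc Q hQ => ?_) T le_rfl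
  have directed : DirectedOn (· ≤ ·) (RingPreordering.toSubsemiring '' c) :=
    (RingPreordering.toSubsemiring_mono.isChain_image hc).directedOn
  have mem_sSup {x : R} :
      x ∈ sSup (RingPreordering.toSubsemiring '' c) ↔ ∃ S ∈ c, x ∈ S := by
    rw [Subsemiring.mem_sSup_of_directedOn ⟨_, Set.mem_image_of_mem _ hQ⟩ directed]
    simp
  let union : RingPreordering R :=
    { sSup (RingPreordering.toSubsemiring '' c) with
      mem_of_isSquare' := fun hx => mem_sSup.2 ⟨Q, hQ, Q.mem_of_isSquare hx⟩
      neg_one_notMem' := fun h =>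
        let ⟨S, _, hS⟩ := mem_sSup.1 h
        S.neg_one_notMem hS }
  exact ⟨union, fun S hS _ hx => mem_sSup.2 ⟨S, hS, hx⟩⟩

variable {F : Type*} [Field F]

/-- The preordering `T + yT` obtained by adjoining `y` to `T`. It is proper when `-y ∉ T`, since
`-1 = s + y r` with `s, r ∈ T` would give `-y = (1 + s) / r ∈ T`. -/
def adjoinPreordering (T : RingPreordering F) (y : F) (hy : -y ∉ T) : RingPreordering F :=
  .mk' {z | ∃ s ∈ T, ∃ r ∈ T, z = s + y * r}
    (by
      rintro _ _ ⟨s, hs, r, hr, rfl⟩ ⟨s', hs', r', hr', rfl⟩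
      exact ⟨s + s', add_mem hs hs', r + r', add_mem hr hr', by ring⟩)
    (by
      rintro _ _ ⟨s, hs, r, hr, rfl⟩ ⟨s', hs', r', hr', rfl⟩
      exact ⟨s * s' + (y * y) * (r * r'),
        add_mem (mul_mem hs hs') (mul_mem (T.mul_self_mem y) (mul_mem hr hr')),
        s * r' + r * s', add_mem (mul_mem hs hr') (mul_mem hr hs'), by ring⟩)
    (fun x => ⟨x * x, T.mul_self_mem x, 0, zero_mem T, by ring⟩)
    (by
      rintro ⟨s, hs, r, hr, h⟩
      have hr0 : r ≠ 0 := by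
        rintro rfl
        exact T.neg_one_notMem (by simpa [h] using hs)
      have neg_y_eq : -y = (1 + s) * r⁻¹ := by
        field_simp
        linear_combination h
      exact hy (neg_y_eq ▸ mul_mem (add_mem (one_mem T) hs) (RingPreordering.inv_mem hr)))

theorem le_adjoinPreordering (T : RingPreordering F) (y : F) (hy : -y ∉ T) :
    T ≤ adjoinPreordering T y hy :=
  fun s hs => ⟨s, hs, 0, zero_mem T, by simp⟩

theorem mem_adjoinPreordering (T : RingPreordering F) (y : F) (hy : -y ∉ T) :
    y ∈ adjoinPreordering T y hy :=
  ⟨0, zero_mem T, 1, one_mem T, by simp⟩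

theorem hasMemOrNegMem_of_isMax {M : RingPreordering F} (hM : IsMax M) : HasMemOrNegMem M where
  mem_or_neg_mem y := or_iff_not_imp_right.2 fun hy =>
    hM (le_adjoinPreordering M y hy) (mem_adjoinPreordering M y hy)

theorem exists_fieldOrdering_not_nonneg (T : RingPreordering F) {x : F} (hx : x ∉ T) :
    ∃ P : FieldOrdering F, (∀ s ∈ T, P.nonneg s) ∧ ¬ P.nonneg x := by
  have hx' : -(-x) ∉ T := by rwa [neg_neg]
  obtain ⟨M, hle, hmax⟩ := exists_le_isMax_preordering (adjoinPreordering T (-x) hx')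
  have := hasMemOrNegMem_of_isMax hmax
  refine ⟨.ofPreordering M, fun s hs => hle (le_adjoinPreordering T _ hx' hs), fun hxM => hx ?_⟩
  have x_eq_zero : x = 0 :=
    RingPreordering.eq_zero_of_mem_of_neg_mem hxM (hle (mem_adjoinPreordering T _ hx'))
  exact x_eq_zero ▸ zero_mem T

theorem mem_of_neg_one_mem (hF : (2 : F) ≠ 0) {S : Subsemiring F} (hS : ∀ x : F, x * x ∈ S)
    (h : (-1 : F) ∈ S) (x : F) : x ∈ S := by
  have x_eq : x = (x + 1) / 2 * ((x + 1) / 2) + -1 * ((x - 1) / 2 * ((x - 1) / 2)) := by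
    field_simp
    ring
  rw [x_eq]
  exact add_mem (hS _) (mul_mem h (hS _))

theorem mem_of_forall_fieldOrdering_nonneg (hF : (2 : F) ≠ 0) {S : Subsemiring F}
    (hS : ∀ x : F, x * x ∈ S) {x : F}
    (hx : ∀ P : FieldOrdering F, (∀ s ∈ S, P.nonneg s) → P.nonneg x) : x ∈ S := by
  by_contra hxS
  obtain ⟨P, hP, hPx⟩ := exists_fieldOrdering_not_nonneg
    (.mk' (S : Set F) add_mem mul_mem hS fun h => hxS (mem_of_neg_one_mem hF hS h x)) hxS
  exact hPx (hx P hP)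

end Preordering

section WeightedSquares

variable {ι : Type*} [Fintype ι]

/-- The monomial `b^e = ∏ⱼ bⱼ^{eⱼ}` for an exponent vector `e ∈ {0,1}^ι`. -/
def weight {M : Type*} [CommMonoid M] (b : ι → M) (e : ι → Bool) : M :=
  ∏ j, if e j then b j else 1

theorem weight_mul_weight {M : Type*} [CommMonoid M] (b : ι → M) (e e' : ι → Bool) :
    weight b e * weight b e' = weight b (fun j => xor (e j) (e' j)) *
      (weight b (fun j => e j && e' j) * weight b (fun j => e j && e' j)) := by
  simp only [weight, ← Finset.prod_mul_distrib]
  refine Finset.prod_congr rfl fun j _ => ?_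
  by_cases h : e j <;> by_cases h' : e' j <;> simp [h, h']

theorem weight_false {M : Type*} [CommMonoid M] (b : ι → M) : weight b (fun _ => false) = 1 := by
  simp [weight]

theorem weight_decide_eq {M : Type*} [CommMonoid M] [DecidableEq ι] (b : ι → M) (j : ι) :
    weight b (fun i => decide (i = j)) = b j := by
  simp [weight]

/-- The elements `b^e q²`. They are closed under multiplication because `b^e b^{e'}` is the product
of a square and the weight of the exponent vector `e + e'` mod 2. -/
def weightedSquares {M : Type*} [CommMonoid M] (b : ι → M) : Submonoid M where
  carrier := {x | ∃ (e : ι → Bool) (q : M), x = weight b e * (q * q)}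
  one_mem' := ⟨fun _ => false, 1, by simp [weight_false]⟩
  mul_mem' := by
    rintro _ _ ⟨e, q, rfl⟩ ⟨e', q', rfl⟩
    refine ⟨fun j => xor (e j) (e' j), weight b (fun j => e j && e' j) * (q * q'), ?_⟩
    rw [mul_mul_mul_comm, weight_mul_weight, mul_mul_mul_comm q, mul_assoc, mul_mul_mul_comm]

/-- The sums of elements `b^e q²`, i.e. the preordering generated by `b`, except that it is not
required to omit `-1`. -/
def weightedSumSq {R : Type*} [CommSemiring R] (b : ι → R) : Subsemiring R :=
  (weightedSquares b).subsemiringClosure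

theorem weight_mul_mul_self_mem_weightedSumSq {R : Type*} [CommSemiring R] (b : ι → R)
    (e : ι → Bool) (q : R) : weight b e * (q * q) ∈ weightedSumSq b :=
  (Submonoid.subsemiringClosure_mem _).2 (AddSubmonoid.subset_closure ⟨e, q, rfl⟩)

theorem mul_self_mem_weightedSumSq {R : Type*} [CommSemiring R] (b : ι → R) (x : R) :
    x * x ∈ weightedSumSq b := by
  simpa [weight_false] using weight_mul_mul_self_mem_weightedSumSq b (fun _ => false) x

theorem apply_mem_weightedSumSq {R : Type*} [CommSemiring R] (b : ι → R) (j : ι) :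
    b j ∈ weightedSumSq b := by
  classical
  simpa [weight_decide_eq] using
    weight_mul_mul_self_mem_weightedSumSq b (fun i => decide (i = j)) 1

variable {F : Type*} [Field F]

theorem FieldOrdering.weight_nonneg (P : FieldOrdering F) {b : ι → F} (hb : ∀ j, P.nonneg (b j))
    (e : ι → Bool) : P.nonneg (weight b e) := by
  refine prod_mem (S := P.nonnegSubsemiring) fun j _ => ?_
  split_ifs
  · exact hb j
  · exact one_mem _

theorem mem_weightedSumSq_of_forall_nonneg (hF : (2 : F) ≠ 0) {b : ι → F} {x : F}
    (hx : ∀ P : FieldOrdering F, (∀ j, P.nonneg (b j)) → P.nonneg x) : x ∈ weightedSumSq b :=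
  mem_of_forall_fieldOrdering_nonneg hF (mul_self_mem_weightedSumSq b) fun P hP =>
    hx P fun j => hP _ (apply_mem_weightedSumSq b j)

end WeightedSquares

section QuadraticForms

variable {m : Type*} [Fintype m]

theorem dotProduct_transpose_mul_mul_mulVec {n R : Type*} [Fintype n] [CommSemiring R]
    (A : Matrix m m R) (X : Matrix m n R) (x : n → R) :
    x ⬝ᵥ ((Xᵀ * A * X) *ᵥ x) = (X *ᵥ x) ⬝ᵥ (A *ᵥ (X *ᵥ x)) := by
  rw [← mulVec_mulVec, ← mulVec_mulVec, dotProduct_mulVec, vecMul_transpose]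

theorem transpose_vecMulVec_mul_mul_vecMulVec {n R : Type*} [CommSemiring R] (A : Matrix m m R)
    (w : m → R) (r : n → R) :
    (vecMulVec w r)ᵀ * A * vecMulVec w r = (w ⬝ᵥ (A *ᵥ w)) • vecMulVec r r := by
  rw [transpose_vecMulVec, Matrix.mul_assoc, mul_vecMulVec, vecMulVec_mul_vecMulVec,
    vecMulVec_smul]

variable {F : Type*} [Field F]

theorem exists_dotProduct_mulVec_self_ne_zero (hF : (2 : F) ≠ 0) {A : Matrix m m F}
    (hA : A.IsSymm) (hA0 : A ≠ 0) : ∃ w : m → F, w ⬝ᵥ (A *ᵥ w) ≠ 0 := by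
  classical
  have := invertibleOfNonzero hF
  obtain ⟨w, hw⟩ := LinearMap.BilinForm.exists_bilinForm_self_ne_zero
    ((map_ne_zero_iff _ Matrix.toBilin'.injective).2 hA0)
    (LinearMap.BilinForm.isSymm_iff.1 (isSymm_toBilin'_iff_isSymm.2 hA))
  exact ⟨w, by rwa [toBilin'_apply'] at hw⟩

theorem exists_eq_sum_smul_vecMulVec (hF : (2 : F) ≠ 0) {U : Matrix m m F} (hU : U.IsSymm) :
    ∃ (d : ℕ) (v r : Fin d → m → F),
      U = ∑ k, (v k ⬝ᵥ (U *ᵥ v k)) • vecMulVec (r k) (r k) := by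
  classical
  have := invertibleOfNonzero hF
  obtain ⟨v, hv⟩ := LinearMap.BilinForm.exists_orthogonal_basis
    (LinearMap.BilinForm.isSymm_iff.1 (isSymm_toBilin'_iff_isSymm.2 hU))
  refine ⟨_, v, fun k i => v.repr (Pi.single i 1) k, ?_⟩
  ext i j
  calc
    U i j = U.toBilin' (Pi.single i 1) (Pi.single j 1) := (toBilin'_single U i j).symm
    _ = ∑ k, ∑ l, v.repr (Pi.single i 1) k * (v.repr (Pi.single j 1) l *
          U.toBilin' (v k) (v l)) := by
      rw [← LinearMap.sum_repr_mul_repr_mul v v, Finsupp.sum_fintype _ _ (by simp)]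
      refine Finset.sum_congr rfl fun k _ => ?_
      rw [Finsupp.sum_fintype _ _ (by simp)]
      simp
    _ = ∑ k, v.repr (Pi.single i 1) k * (v.repr (Pi.single j 1) k * U.toBilin' (v k) (v k)) :=
      Finset.sum_congr rfl fun k _ => Fintype.sum_eq_single k fun l hl => by
        have ortho : U.toBilin' (v k) (v l) = 0 := hv hl.symm
        rw [ortho, mul_zero, mul_zero]
    _ = (∑ k, (v k ⬝ᵥ (U *ᵥ v k)) • vecMulVec (fun i => v.repr (Pi.single i 1) k)
          (fun i => v.repr (Pi.single i 1) k)) i j := by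
      simp only [toBilin'_apply', Matrix.sum_apply, Matrix.smul_apply, vecMulVec_apply,
        smul_eq_mul]
      exact Finset.sum_congr rfl fun k _ => by ring

end QuadraticForms

section WeightedCongruenceSums

variable {ι m : Type*} [Fintype ι] [DecidableEq ι] [Fintype m]

/-- The matrices `∑ₑ b^e ∑ᵢ X_{e,i}ᵀ A X_{e,i}`, i.e. for symmetric `A` those represented by
`2^s × ⟨⟨b₁, …, bₜ⟩⟩ ⊗ ⟨A⟩` for some `s`. The number of summands is the same for each `e`, which is
no restriction as summands may be zero. -/
def weightedCongruenceSums {R : Type*} [CommSemiring R] (b : ι → R) (A : Matrix m m R) :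
    AddSubmonoid (Matrix m m R) where
  carrier := {V | ∃ (N : ℕ) (X : (ι → Bool) → Fin N → Matrix m m R),
    V = ∑ e, weight b e • ∑ i, (X e i)ᵀ * A * X e i}
  zero_mem' := ⟨0, fun _ _ => 0, by simp⟩
  add_mem' := by
    rintro _ _ ⟨N, X, rfl⟩ ⟨N', X', rfl⟩
    refine ⟨N + N', fun e => Fin.append (X e) (X' e), ?_⟩
    simp only [Fin.sum_univ_add, Fin.append_left, Fin.append_right, smul_add,
      Finset.sum_add_distrib]

theorem smul_mem_weightedCongruenceSums {R : Type*} [CommSemiring R] {b : ι → R} {c : R}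
    (hc : c ∈ weightedSumSq b) (A X : Matrix m m R) :
    c • (Xᵀ * A * X) ∈ weightedCongruenceSums b A := by
  rw [weightedSumSq, Submonoid.subsemiringClosure_mem] at hc
  induction hc using AddSubmonoid.closure_induction with
  | mem x hx =>
    obtain ⟨e, q, rfl⟩ := hx
    refine ⟨1, fun e' _ => if e' = e then q • X else 0, ?_⟩
    rw [Fintype.sum_eq_single e fun e' he' => by simp [he']]
    simp [smul_smul, mul_assoc]
  | zero => simp
  | add x y _ _ hx hy => simpa only [add_smul] using add_mem hx hy

variable {F : Type*} [Field F]

theorem smul_vecMulVec_mem_weightedCongruenceSums {b : ι → F} {A : Matrix m m F} {w : m → F}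
    {q d : F} (hw : w ⬝ᵥ (A *ᵥ w) = q) (hq0 : q ≠ 0) (hq : q ∈ weightedSumSq b)
    (hd : d ∈ weightedSumSq b) (r : m → F) :
    d • vecMulVec r r ∈ weightedCongruenceSums b A := by
  have congruence : d • vecMulVec r r =
      (d * q) • ((vecMulVec w (q⁻¹ • r))ᵀ * A * vecMulVec w (q⁻¹ • r)) := by
    rw [transpose_vecMulVec_mul_mul_vecMulVec, hw, smul_vecMulVec, vecMulVec_smul]
    simp only [smul_smul]
    congr 1
    field_simp
  rw [congruence]
  exact smul_mem_weightedCongruenceSums (mul_mem hd hq) A _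

end WeightedCongruenceSums

section PositiveMatrices

variable {F : Type*} [Field F] {n : ℕ}

namespace FieldOrdering

variable (P : FieldOrdering F)

theorem isPSDAt_of_isPDAt {M : Matrix (Fin n) (Fin n) F} (hM : M.IsPDAt P) : M.IsPSDAt P := by
  intro x
  by_cases hx : x = 0
  · rw [hx, zero_dotProduct]
    exact P.nonnegSubsemiring.zero_mem
  · exact (hM x hx).1

/-- If `xᵀMx = 0` but `s = yᵀMx ≠ 0`, then `(y + cx)ᵀM(y + cx) = yᵀMy + 2cs` takes the value `-1`
for a suitable `c`. -/
theorem mulVec_eq_zero_of_isPSDAt {M : Matrix (Fin n) (Fin n) F} (hM : M.IsSymm)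
    (hpsd : M.IsPSDAt P) {x : Fin n → F} (hx : x ⬝ᵥ (M *ᵥ x) = 0) : M *ᵥ x = 0 := by
  refine dotProduct_eq_zero _ fun y => ?_
  rw [dotProduct_comm]
  by_contra hs
  have symm : x ⬝ᵥ (M *ᵥ y) = y ⬝ᵥ (M *ᵥ x) := by
    rw [dotProduct_mulVec, ← mulVec_transpose, hM.eq, dotProduct_comm]
  set s := y ⬝ᵥ (M *ᵥ x)
  set c := -(y ⬝ᵥ (M *ᵥ y) + 1) / (2 * s) with hc
  have value : (y + c • x) ⬝ᵥ (M *ᵥ (y + c • x)) = -1 := by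
    have expand : (y + c • x) ⬝ᵥ (M *ᵥ (y + c • x)) = y ⬝ᵥ (M *ᵥ y) + 2 * c * s := by
      simp only [mulVec_add, mulVec_smul, add_dotProduct, dotProduct_add, smul_dotProduct,
        dotProduct_smul, smul_eq_mul, symm, hx]
      ring
    have := P.two_ne_zero
    rw [expand, hc]
    field_simp
    ring
  exact P.not_nonneg_neg_one (value ▸ hpsd _)

theorem isPDAt_iff_isPSDAt {M : Matrix (Fin n) (Fin n) F} (hM : M.IsSymm) (hMu : IsUnit M) :
    M.IsPDAt P ↔ M.IsPSDAt P := by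
  refine ⟨P.isPSDAt_of_isPDAt, fun hpsd x hx => ⟨hpsd x, fun h => hx ?_⟩⟩
  exact mulVec_injective_of_isUnit hMu (by simp [P.mulVec_eq_zero_of_isPSDAt hM hpsd h])

theorem isPSDAt_of_mem_weightedCongruenceSums {ι : Type*} [Fintype ι] [DecidableEq ι]
    {b : ι → F} (hb : ∀ j, P.nonneg (b j)) {A U : Matrix (Fin n) (Fin n) F} (hA : A.IsPSDAt P)
    (hU : U ∈ weightedCongruenceSums b A) : U.IsPSDAt P := by
  obtain ⟨N, X, rfl⟩ := hU
  intro x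
  simp only [sum_mulVec, smul_mulVec, dotProduct_sum, dotProduct_smul, smul_eq_mul,
    dotProduct_transpose_mul_mul_mulVec]
  exact sum_mem (S := P.nonnegSubsemiring) fun e _ =>
    mul_mem (P.weight_nonneg hb e) (sum_mem fun i _ => hA (X e i *ᵥ x))

end FieldOrdering

theorem mem_weightedCongruenceSums_iff_forall_isPSDAt (hF : (2 : F) ≠ 0)
    {ι : Type*} [Fintype ι] [DecidableEq ι] {b : ι → F}
    {A U : Matrix (Fin n) (Fin n) F} (hA : A.IsSymm) (hU : U.IsSymm)
    (hAU : A = 0 → U = 0)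
    (hApsd : ∀ P : FieldOrdering F, (∀ j, P.nonneg (b j)) → A.IsPSDAt P) :
    U ∈ weightedCongruenceSums b A ↔
      ∀ P : FieldOrdering F, (∀ j, P.nonneg (b j)) → U.IsPSDAt P := by
  refine ⟨fun h P hP => P.isPSDAt_of_mem_weightedCongruenceSums hP (hApsd P hP) h, fun hUpsd => ?_⟩
  by_cases hA0 : A = 0
  · exact hAU hA0 ▸ zero_mem _
  obtain ⟨w, hw⟩ := exists_dotProduct_mulVec_self_ne_zero hF hA hA0
  obtain ⟨d, v, r, hdiag⟩ := exists_eq_sum_smul_vecMulVec hF hU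
  rw [hdiag]
  exact sum_mem fun k _ => smul_vecMulVec_mem_weightedCongruenceSums rfl hw
    (mem_weightedSumSq_of_forall_nonneg hF fun P hP => hApsd P hP w)
    (mem_weightedSumSq_of_forall_nonneg hF fun P hP => hUpsd P hP (v k)) (r k)

end PositiveMatrices

section AdjointInvolution

variable {m R : Type*} [Fintype m] [DecidableEq m] [CommRing R] {Φ : Matrix m m R}

theorem isSymm_inv_mul_of_adjoint_eq (hΦsym : Φᵀ = Φ) (hΦ : IsUnit Φ.det) {c : Matrix m m R}
    (hc : Φ * cᵀ * Φ⁻¹ = c) : (Φ⁻¹ * c).IsSymm :=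
  calc
    (Φ⁻¹ * c)ᵀ = cᵀ * Φ⁻¹ := by rw [transpose_mul, transpose_nonsing_inv, hΦsym]
    _ = Φ⁻¹ * (Φ * cᵀ * Φ⁻¹) := by rw [Matrix.mul_assoc, nonsing_inv_mul_cancel_left _ _ hΦ]
    _ = Φ⁻¹ * c := by rw [hc]

theorem inv_mul_mem_weightedCongruenceSums_iff {ι : Type*} [Fintype ι] [DecidableEq ι]
    (hΦ : IsUnit Φ.det) (b : ι → R) (a u : Matrix m m R) :
    Φ⁻¹ * u ∈ weightedCongruenceSums b (Φ⁻¹ * a) ↔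
      ∃ (N : ℕ) (X : (ι → Bool) → Fin N → Matrix m m R),
        u = ∑ e, weight b e • ∑ i, (Φ * (X e i)ᵀ * Φ⁻¹) * a * X e i := by
  refine exists_congr fun N => exists_congr fun X => ?_
  have factor : ∑ e, weight b e • ∑ i, (Φ * (X e i)ᵀ * Φ⁻¹) * a * X e i =
      Φ * ∑ e, weight b e • ∑ i, (X e i)ᵀ * (Φ⁻¹ * a) * X e i := by
    simp only [Matrix.mul_sum, Matrix.mul_smul, Matrix.mul_assoc]
  rw [factor]
  constructor
  · intro h
    rw [← h, mul_nonsing_inv_cancel_left _ _ hΦ]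
  · rintro rfl
    rw [nonsing_inv_mul_cancel_left _ _ hΦ]

theorem isPDAt_inv_mul_iff_isPSDAt {F : Type*} [Field F] (P : FieldOrdering F) {n : ℕ}
    {Φ c : Matrix (Fin n) (Fin n) F} (hΦsym : Φᵀ = Φ) (hΦ : IsUnit Φ.det) (hc : IsUnit c)
    (hcσ : Φ * cᵀ * Φ⁻¹ = c) : (Φ⁻¹ * c).IsPDAt P ↔ (Φ⁻¹ * c).IsPSDAt P :=
  P.isPDAt_iff_isPSDAt (isSymm_inv_mul_of_adjoint_eq hΦsym hΦ hcσ)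
    ((isUnit_nonsing_inv_iff.2 ((isUnit_iff_isUnit_det Φ).2 hΦ)).mul hc)

end AdjointInvolution

theorem stmt_2_general {F : Type*} [Field F] (hF : (2 : F) ≠ 0) {n : ℕ}
    {Φ : Matrix (Fin n) (Fin n) F} (hΦsym : Φᵀ = Φ) (hΦ : IsUnit Φ.det)
    {ι : Type*} [Fintype ι] [DecidableEq ι] (b : ι → F)
    {a u : Matrix (Fin n) (Fin n) F} (haσ : Φ * aᵀ * Φ⁻¹ = a) (huσ : Φ * uᵀ * Φ⁻¹ = u)
    (hau : a = 0 → u = 0)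
    (hapsd : ∀ P : FieldOrdering F, (∀ j, P.nonneg (b j)) → (Φ⁻¹ * a).IsPSDAt P) :
    (∀ P : FieldOrdering F, (∀ j, P.nonneg (b j)) → (Φ⁻¹ * u).IsPSDAt P) ↔
      ∃ (N : ℕ) (X : (ι → Bool) → Fin N → Matrix (Fin n) (Fin n) F),
        u = ∑ e : ι → Bool,
          (∏ j, if e j then b j else 1) •
            ∑ i, (Φ * (X e i)ᵀ * Φ⁻¹) * a * X e i := by
  have inv_mul_eq_zero (h : Φ⁻¹ * a = 0) : Φ⁻¹ * u = 0 := by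
    rw [hau (by rw [← mul_nonsing_inv_cancel_left Φ a hΦ, h, Matrix.mul_zero]), Matrix.mul_zero]
  exact (mem_weightedCongruenceSums_iff_forall_isPSDAt hF
    (isSymm_inv_mul_of_adjoint_eq hΦsym hΦ haσ) (isSymm_inv_mul_of_adjoint_eq hΦsym hΦ huσ)
    inv_mul_eq_zero hapsd).symm.trans (inv_mul_mem_weightedCongruenceSums_iff hΦ b a u)

/-- Invertible case of the main theorem, split orthogonal case: for `σ = ad_Φ` and an
invertible σ-symmetric `a` with `Φ⁻¹a` positive definite on `Y = H(b₁,…,b_t)`,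
an invertible σ-symmetric `u` has `Φ⁻¹u` positive definite at all `P ∈ Y` iff `u` is a
weighted sum of elements `σ(X) a X` with weights `b₁^{e₁} ⋯ b_t^{e_t}`. -/
theorem stmt_2 {F : Type*} [Field F] (hF : (2 : F) ≠ 0) {n : ℕ}
    (Φ : Matrix (Fin n) (Fin n) F) (hΦsym : Φᵀ = Φ) (hΦ : IsUnit Φ.det)
    {t : ℕ} (b : Fin t → F) (hb : ∀ j, b j ≠ 0)
    (a : Matrix (Fin n) (Fin n) F) (ha : IsUnit a) (haσ : Φ * aᵀ * Φ⁻¹ = a)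
    (hamax : ∀ P : FieldOrdering F, (∀ j, P.pos (b j)) → (Φ⁻¹ * a).IsPDAt P)
    (u : Matrix (Fin n) (Fin n) F) (hu : IsUnit u) (huσ : Φ * uᵀ * Φ⁻¹ = u) :
    (∀ P : FieldOrdering F, (∀ j, P.pos (b j)) → (Φ⁻¹ * u).IsPDAt P) ↔
      ∃ (N : ℕ) (X : (Fin t → Bool) → Fin N → Matrix (Fin n) (Fin n) F),
        u = ∑ e : Fin t → Bool,
          (∏ j, if e j then b j else 1) •
            ∑ i, (Φ * (X e i)ᵀ * Φ⁻¹) * a * X e i := by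
  simp only [FieldOrdering.pos, hb, ne_eq, not_false_eq_true, and_true,
    isPDAt_inv_mul_iff_isPSDAt _ hΦsym hΦ ha haσ, isPDAt_inv_mul_iff_isPSDAt _ hΦsym hΦ hu huσ]
    at hamax ⊢
  exact stmt_2_general hF hΦsym hΦ b haσ huσ
    (fun h => eq_zero_of_zero_eq_one (isUnit_zero_iff.1 (h ▸ ha)) u) hamax
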